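/- arXiv:2301.00039 — 5 statements merged into one kernel-verified Lean document; each statement's English description precedes it below -/
import Mathlib

section
/- The potential flow field satisfies Navier's slip (friction) condition on the unit circle with friction coefficient β = −2ν for every ν > 0: at every point (x,y) ∈ Γ one has nᵗ(∇u_P + ∇u_Pᵗ)τ = 4y = 2 (u_P·τ), so that (−2ν)(u_P·τ) = −ν nᵗ(∇u_P + ∇u_Pᵗ)τ. -/
/-! Identifying `(x, y)` with `z = x + iy`, the field satisfies `u₁ - i u₂ = 1 - z⁻²`, whose complex
derivative is `2 z⁻³`. On the unit circle the Jacobian is therefore symmetric and trace-free, with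
`∂ₓu₁ = 2 cos 3θ` and `∂ₓu₂ = 2 sin 3θ`, and the friction term is
`4 (sin 3θ cos 2θ - cos 3θ sin 2θ) = 4 sin θ = 4y`. Moreover `u = 2y τ` there, so `u · τ = 2y`. In Cartesian
coordinates this becomes the four
partial derivatives below, followed by polynomial identities modulo `x² + y² = 1`. -/

noncomputable section
open Matrix

/-- Partial derivative in the first variable. -/
def pdx (f : ℝ → ℝ → ℝ) (x y : ℝ) : ℝ := deriv (fun t => f t y) x

/-- Partial derivative in the second variable. -/
def pdy (f : ℝ → ℝ → ℝ) (x y : ℝ) : ℝ := deriv (fun t => f x t) y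

/-- Jacobian matrix `∇u` of the vector field `u = (u1, u2)`. -/
def jac (u1 u2 : ℝ → ℝ → ℝ) (x y : ℝ) : Matrix (Fin 2) (Fin 2) ℝ :=
  !![pdx u1 x y, pdy u1 x y; pdx u2 x y, pdy u2 x y]

/-- Bilinear evaluation `nᵗ M τ` of a 2×2 matrix at the vectors `n` and `τ`. -/
def bilin (n : ℝ × ℝ) (M : Matrix (Fin 2) (Fin 2) ℝ) (τ : ℝ × ℝ) : ℝ :=
  n.1 * (M 0 0 * τ.1 + M 0 1 * τ.2) + n.2 * (M 1 0 * τ.1 + M 1 1 * τ.2)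

/-- First component of the potential flow field. -/
def uP1 (x y : ℝ) : ℝ := 1 + (y ^ 2 - x ^ 2) / (x ^ 2 + y ^ 2) ^ 2

/-- Second component of the potential flow field. -/
def uP2 (x y : ℝ) : ℝ := -2 * x * y / (x ^ 2 + y ^ 2) ^ 2

lemma pdx_uP1 {x y : ℝ} (h : x ^ 2 + y ^ 2 = 1) :
    pdx uP1 x y = -2 * x - 4 * x * (y ^ 2 - x ^ 2) := by
  have hN : HasDerivAt (fun t : ℝ => y ^ 2 - t ^ 2) (-(2 * x)) x := by
    simpa using (hasDerivAt_pow 2 x).const_sub (y ^ 2)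
  have hD : HasDerivAt (fun t : ℝ => (t ^ 2 + y ^ 2) ^ 2) (2 * (x ^ 2 + y ^ 2) * (2 * x)) x := by
    simpa using ((hasDerivAt_pow 2 x).add_const (y ^ 2)).fun_pow 2
  have hu := ((hN.fun_div hD (by simp [h])).const_add 1).deriv
  unfold pdx uP1
  rw [hu, h]
  ring

lemma pdy_uP1 {x y : ℝ} (h : x ^ 2 + y ^ 2 = 1) :
    pdy uP1 x y = 2 * y - 4 * y * (y ^ 2 - x ^ 2) := by
  have hN : HasDerivAt (fun t : ℝ => t ^ 2 - x ^ 2) (2 * y) y := by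
    simpa using (hasDerivAt_pow 2 y).sub_const (x ^ 2)
  have hD : HasDerivAt (fun t : ℝ => (x ^ 2 + t ^ 2) ^ 2) (2 * (x ^ 2 + y ^ 2) * (2 * y)) y := by
    simpa using ((hasDerivAt_pow 2 y).const_add (x ^ 2)).fun_pow 2
  have hu := ((hN.fun_div hD (by simp [h])).const_add 1).deriv
  unfold pdy uP1
  rw [hu, h]
  ring

lemma pdx_uP2 {x y : ℝ} (h : x ^ 2 + y ^ 2 = 1) :
    pdx uP2 x y = -2 * y + 8 * x ^ 2 * y := by
  have hN : HasDerivAt (fun t : ℝ => -2 * t * y) (-2 * y) x := by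
    simpa using ((hasDerivAt_id x).const_mul (-2)).mul_const y
  have hD : HasDerivAt (fun t : ℝ => (t ^ 2 + y ^ 2) ^ 2) (2 * (x ^ 2 + y ^ 2) * (2 * x)) x := by
    simpa using ((hasDerivAt_pow 2 x).add_const (y ^ 2)).fun_pow 2
  have hu := (hN.fun_div hD (by simp [h])).deriv
  unfold pdx uP2
  rw [hu, h]
  ring

lemma pdy_uP2 {x y : ℝ} (h : x ^ 2 + y ^ 2 = 1) :
    pdy uP2 x y = -2 * x + 8 * x * y ^ 2 := by
  have hN : HasDerivAt (fun t : ℝ => -2 * x * t) (-2 * x) y := by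
    simpa using (hasDerivAt_id y).const_mul (-2 * x)
  have hD : HasDerivAt (fun t : ℝ => (x ^ 2 + t ^ 2) ^ 2) (2 * (x ^ 2 + y ^ 2) * (2 * y)) y := by
    simpa using ((hasDerivAt_pow 2 y).const_add (x ^ 2)).fun_pow 2
  have hu := (hN.fun_div hD (by simp [h])).deriv
  unfold pdy uP2
  rw [hu, h]
  ring

/-- The potential flow satisfies Navier's slip condition on the unit circle with friction
coefficient `β = −2ν` for every `ν > 0`: on `Γ`, `nᵗ(∇u_P + ∇u_Pᵗ)τ = 4y = 2(u_P·τ)`,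
hence `(−2ν)(u_P·τ) = −ν nᵗ(∇u_P + ∇u_Pᵗ)τ`. -/
theorem stmt_4 :
    ∀ ν : ℝ, 0 < ν → ∀ x y : ℝ, x ^ 2 + y ^ 2 = 1 →
      bilin (-x, -y) (jac uP1 uP2 x y + (jac uP1 uP2 x y)ᵀ) (y, -x) = 4 * y ∧
      4 * y = 2 * (uP1 x y * y + uP2 x y * (-x)) ∧
      (-2 * ν) * (uP1 x y * y + uP2 x y * (-x)) =
        -ν * bilin (-x, -y) (jac uP1 uP2 x y + (jac uP1 uP2 x y)ᵀ) (y, -x) := by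
  intro ν _ x y h
  have hB : bilin (-x, -y) (jac uP1 uP2 x y + (jac uP1 uP2 x y)ᵀ) (y, -x) = 4 * y := by
    simp only [bilin, jac, pdx_uP1 h, pdy_uP1 h, pdx_uP2 h, pdy_uP2 h, Matrix.add_apply,
      Matrix.transpose_apply, Matrix.of_apply, Matrix.cons_val_zero, Matrix.cons_val_one]
    grind
  have hT : 4 * y = 2 * (uP1 x y * y + uP2 x y * (-x)) := by
    simp only [uP1, uP2, h]
    grind
  refine ⟨hB, hT, ?_⟩
  rw [hB]
  linear_combination ν * hT

end
end

section
/- The zero-friction flow field u_Z equals (∂ψ/∂y, −∂ψ/∂x) for the stream function ψ(x,y) = y log r, it is divergence free, and together with the pressure p(x,y) = −2x/r² it solves the Stokes equations: −Δu_Z + ∇p = 0 and div u_Z = 0 on ℝ² \ {(0,0)}. -/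
/-! Away from the origin `q = x² + y²` is nonzero, so `log r = (log q) / 2` is differentiable with
gradient `(x, y) / q`. This gives the stream function identities at once, and shows that the first
partial derivatives of `u_Z` are rational functions with denominator `q²`. Since `q ≠ 0` is an open
condition, these formulas hold on a neighbourhood and can be differentiated once more
(`pdx_eq_of_formula`, `pdy_eq_of_formula`). This yields `Δu_Z = ∇p`, both sides being
`(2 (x² - y²), 4 x y) / q²`. -/

noncomputable section

/-- Two-dimensional Laplacian `∂²f/∂x² + ∂²f/∂y²`. -/
def lap (f : ℝ → ℝ → ℝ) (x y : ℝ) : ℝ := pdx (pdx f) x y + pdy (pdy f) x y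

/-- First component of the zero-friction flow field. -/
def uZ1 (x y : ℝ) : ℝ := y ^ 2 / (x ^ 2 + y ^ 2) + Real.log (Real.sqrt (x ^ 2 + y ^ 2))

/-- Second component of the zero-friction flow field. -/
def uZ2 (x y : ℝ) : ℝ := -(x * y) / (x ^ 2 + y ^ 2)

/-- The stream function `ψ(x,y) = y log r`. -/
def ψZ (x y : ℝ) : ℝ := y * Real.log (Real.sqrt (x ^ 2 + y ^ 2))

/-- The pressure `p(x,y) = −2x/r²`. -/
def pZ (x y : ℝ) : ℝ := -2 * x / (x ^ 2 + y ^ 2)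

lemma q_ne {x y : ℝ} (h : (x, y) ≠ ((0 : ℝ), (0 : ℝ))) : x ^ 2 + y ^ 2 ≠ 0 := by
  intro h0
  exact h (Prod.ext (by nlinarith [sq_nonneg x, sq_nonneg y]) (by nlinarith [sq_nonneg x, sq_nonneg y]))

lemma hasDerivAt_q_x (x y : ℝ) : HasDerivAt (fun t : ℝ => t ^ 2 + y ^ 2) (2 * x) x := by
  simpa using (hasDerivAt_pow 2 x).add_const (y ^ 2)

lemma hasDerivAt_q_y (x y : ℝ) : HasDerivAt (fun t : ℝ => x ^ 2 + t ^ 2) (2 * y) y := by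
  simpa using (hasDerivAt_pow 2 y).const_add (x ^ 2)

lemma log_r (x y : ℝ) :
    Real.log (Real.sqrt (x ^ 2 + y ^ 2)) = Real.log (x ^ 2 + y ^ 2) / 2 :=
  Real.log_sqrt (by positivity)

lemma hasDerivAt_log_x {x y : ℝ} (h : x ^ 2 + y ^ 2 ≠ 0) :
    HasDerivAt (fun t => Real.log (Real.sqrt (t ^ 2 + y ^ 2))) (x / (x ^ 2 + y ^ 2)) x := by
  simp only [log_r]
  refine HasDerivAt.congr_deriv (((hasDerivAt_q_x x y).log h).div_const 2 :) ?_
  ring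

lemma hasDerivAt_log_y {x y : ℝ} (h : x ^ 2 + y ^ 2 ≠ 0) :
    HasDerivAt (fun t => Real.log (Real.sqrt (x ^ 2 + t ^ 2))) (y / (x ^ 2 + y ^ 2)) y := by
  simp only [log_r]
  refine HasDerivAt.congr_deriv (((hasDerivAt_q_y x y).log h).div_const 2 :) ?_
  ring

lemma pdx_ψZ {x y : ℝ} (h : x ^ 2 + y ^ 2 ≠ 0) : pdx ψZ x y = x * y / (x ^ 2 + y ^ 2) := by
  refine HasDerivAt.deriv ?_
  unfold ψZ
  refine HasDerivAt.congr_deriv ((hasDerivAt_log_x h).const_mul y :) ?_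
  ring

lemma pdy_ψZ {x y : ℝ} (h : x ^ 2 + y ^ 2 ≠ 0) : pdy ψZ x y = uZ1 x y := by
  refine HasDerivAt.deriv ?_
  unfold ψZ uZ1
  refine HasDerivAt.congr_deriv ((hasDerivAt_id' y).mul (hasDerivAt_log_y h) :) ?_
  ring

lemma pdx_uZ1 {x y : ℝ} (h : x ^ 2 + y ^ 2 ≠ 0) :
    pdx uZ1 x y = (x ^ 3 - x * y ^ 2) / (x ^ 2 + y ^ 2) ^ 2 := by
  refine HasDerivAt.deriv ?_
  unfold uZ1
  refine HasDerivAt.congr_deriv (((hasDerivAt_const x (y ^ 2)).div (hasDerivAt_q_x x y) h).add (hasDerivAt_log_x h) :) ?_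
  field_simp
  ring

lemma pdy_uZ1 {x y : ℝ} (h : x ^ 2 + y ^ 2 ≠ 0) :
    pdy uZ1 x y = (3 * x ^ 2 * y + y ^ 3) / (x ^ 2 + y ^ 2) ^ 2 := by
  refine HasDerivAt.deriv ?_
  unfold uZ1
  refine HasDerivAt.congr_deriv (((hasDerivAt_pow 2 y).div (hasDerivAt_q_y x y) h).add (hasDerivAt_log_y h) :) ?_
  field_simp
  push_cast
  ring

lemma pdx_uZ2 {x y : ℝ} (h : x ^ 2 + y ^ 2 ≠ 0) :
    pdx uZ2 x y = (x ^ 2 * y - y ^ 3) / (x ^ 2 + y ^ 2) ^ 2 := by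
  refine HasDerivAt.deriv ?_
  unfold uZ2
  refine HasDerivAt.congr_deriv (((hasDerivAt_id' x).mul_const y).neg.div (hasDerivAt_q_x x y) h :) ?_
  simp only [Pi.neg_apply]
  field_simp
  ring

lemma pdy_uZ2 {x y : ℝ} (h : x ^ 2 + y ^ 2 ≠ 0) :
    pdy uZ2 x y = (x * y ^ 2 - x ^ 3) / (x ^ 2 + y ^ 2) ^ 2 := by
  refine HasDerivAt.deriv ?_
  unfold uZ2
  refine HasDerivAt.congr_deriv (((hasDerivAt_id' y).const_mul x).neg.div (hasDerivAt_q_y x y) h :) ?_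
  simp only [Pi.neg_apply]
  field_simp
  ring

lemma pdx_pZ {x y : ℝ} (h : x ^ 2 + y ^ 2 ≠ 0) :
    pdx pZ x y = 2 * (x ^ 2 - y ^ 2) / (x ^ 2 + y ^ 2) ^ 2 := by
  refine HasDerivAt.deriv ?_
  unfold pZ
  refine HasDerivAt.congr_deriv (((hasDerivAt_id' x).const_mul (-2)).div (hasDerivAt_q_x x y) h :) ?_
  field_simp
  ring

lemma pdy_pZ {x y : ℝ} (h : x ^ 2 + y ^ 2 ≠ 0) :
    pdy pZ x y = 4 * x * y / (x ^ 2 + y ^ 2) ^ 2 := by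
  refine HasDerivAt.deriv ?_
  unfold pZ
  refine HasDerivAt.congr_deriv ((hasDerivAt_const y (-2 * x)).div (hasDerivAt_q_y x y) h :) ?_
  field_simp
  ring

/-- A formula `g` for a function off the origin may be used to differentiate it there. -/
lemma pdx_eq_of_formula {f g : ℝ → ℝ → ℝ} {x y d : ℝ} (h : x ^ 2 + y ^ 2 ≠ 0)
    (hfg : ∀ {a b : ℝ}, a ^ 2 + b ^ 2 ≠ 0 → f a b = g a b)
    (hg : HasDerivAt (fun t => g t y) d x) : pdx f x y = d := by
  refine (hg.congr_of_eventuallyEq ?_).deriv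
  filter_upwards [(hasDerivAt_q_x x y).continuousAt.eventually_ne h] with t ht using hfg ht

/-- The counterpart of `pdx_eq_of_formula` in the second variable. -/
lemma pdy_eq_of_formula {f g : ℝ → ℝ → ℝ} {x y d : ℝ} (h : x ^ 2 + y ^ 2 ≠ 0)
    (hfg : ∀ {a b : ℝ}, a ^ 2 + b ^ 2 ≠ 0 → f a b = g a b)
    (hg : HasDerivAt (fun t => g x t) d y) : pdy f x y = d := by
  refine (hg.congr_of_eventuallyEq ?_).deriv
  filter_upwards [(hasDerivAt_q_y x y).continuousAt.eventually_ne h] with t ht using hfg ht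

lemma lap_uZ1 {x y : ℝ} (h : x ^ 2 + y ^ 2 ≠ 0) :
    lap uZ1 x y = 2 * (x ^ 2 - y ^ 2) / (x ^ 2 + y ^ 2) ^ 2 := by
  have hq : (x ^ 2 + y ^ 2) ^ 2 ≠ 0 := pow_ne_zero 2 h
  rw [lap, pdx_eq_of_formula h pdx_uZ1 (((hasDerivAt_pow 3 x).sub
      ((hasDerivAt_id' x).mul_const (y ^ 2))).div ((hasDerivAt_q_x x y).pow 2) hq),
    pdy_eq_of_formula h pdy_uZ1 ((((hasDerivAt_id' y).const_mul (3 * x ^ 2)).add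
      (hasDerivAt_pow 3 y)).div ((hasDerivAt_q_y x y).pow 2) hq)]
  simp only [Pi.add_apply, Pi.sub_apply]
  field_simp
  push_cast
  ring

lemma lap_uZ2 {x y : ℝ} (h : x ^ 2 + y ^ 2 ≠ 0) :
    lap uZ2 x y = 4 * x * y / (x ^ 2 + y ^ 2) ^ 2 := by
  have hq : (x ^ 2 + y ^ 2) ^ 2 ≠ 0 := pow_ne_zero 2 h
  rw [lap, pdx_eq_of_formula h pdx_uZ2 ((((hasDerivAt_pow 2 x).mul_const y).sub_const
      (y ^ 3)).div ((hasDerivAt_q_x x y).pow 2) hq),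
    pdy_eq_of_formula h pdy_uZ2 ((((hasDerivAt_pow 2 y).const_mul x).sub_const
      (x ^ 3)).div ((hasDerivAt_q_y x y).pow 2) hq)]
  field_simp
  push_cast
  ring

/-- The zero-friction flow field `u_Z` equals `(∂ψ/∂y, −∂ψ/∂x)` for `ψ = y log r`, is
divergence free, and together with `p = −2x/r²` solves the Stokes equations
`−Δu_Z + ∇p = 0`, `div u_Z = 0` on `ℝ² \ {(0,0)}`. -/
theorem stmt_5 :
    ∀ x y : ℝ, (x, y) ≠ ((0 : ℝ), (0 : ℝ)) →
      (uZ1 x y = pdy ψZ x y ∧ uZ2 x y = -pdx ψZ x y) ∧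
      (pdx uZ1 x y + pdy uZ2 x y = 0) ∧
      (-(lap uZ1 x y) + pdx pZ x y = 0 ∧ -(lap uZ2 x y) + pdy pZ x y = 0) := by
  intro x y hxy
  have h := q_ne hxy
  refine ⟨⟨(pdy_ψZ h).symm, ?_⟩, ?_, ?_, ?_⟩
  · rw [pdx_ψZ h, uZ2, neg_div]
  · rw [pdx_uZ1 h, pdy_uZ2 h]
    ring
  · rw [lap_uZ1 h, pdx_pZ h]
    ring
  · rw [lap_uZ2 h, pdy_pZ h]
    ring

end
end

section
/- For every α with 0 < α < 1/2, the scalar function v(x) = (log |x|)^α on the exterior domain Ω_e = {x ∈ ℝ² : |x| > e} satisfies ∫_{Ω_e} |∇v(x)|² dx < ∞ and ∫_{Ω_e} (1 + |x| log |x|)⁻² v(x)² dx < ∞, yet v(x) → ∞ as |x| → ∞. Thus a function with finite weighted H¹ norm on an exterior planar domain may diverge at infinity. -/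
/-!
Both integrands are dominated by the radial function `w(|x|)` with
`w(r) = (r log r)⁻² (log r)^(2α)`: the weight because `1 + r log r ≥ r log r`, and the gradient
because `|∇v(x)| ≤ α |x|⁻¹ (log |x|)^(α-1)`, the norm being 1-Lipschitz, with `α < 1`.
In polar coordinates the integral of `w(|x|)` over the plane domain is a multiple of
`∫ r w(r) dr = ∫ r⁻¹ (log r)^(2α-2) dr` over `(e, ∞)`, which converges because the integrand is
the derivative of `(2α-1)⁻¹ (log r)^(2α-1)` and `2α - 1 < 0`.
Divergence of `v` at infinity is the composition of the divergences of the norm, the logarithm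
and a positive power.
-/

noncomputable section
open MeasureTheory

/-- The radial majorant `w(r) = (r log r)⁻² (log r)^(2α)` of both integrands. -/
def radialMajorant (α r : ℝ) : ℝ := ((r * Real.log r)⁻¹) ^ 2 * (Real.log r ^ α) ^ 2

lemma one_lt_log_of_exp_one_lt {r : ℝ} (hr : Real.exp 1 < r) : 1 < Real.log r :=
  (Real.lt_log_iff_exp_lt ((Real.exp_pos 1).trans hr)).2 hr

lemma mul_radialMajorant (α : ℝ) {r : ℝ} (hr : 0 < r) (hL : 0 < Real.log r) :
    r * radialMajorant α r = Real.log r ^ (2 * α - 2) / r := by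
  have h1 : Real.log r ^ (2 * α - 2) = (Real.log r ^ α) ^ 2 / Real.log r ^ 2 := by
    rw [Real.rpow_sub hL, ← Real.rpow_natCast (Real.log r ^ α) 2, ← Real.rpow_mul hL.le,
      ← Real.rpow_natCast (Real.log r) 2]
    norm_num [mul_comm]
  rw [h1, radialMajorant]
  field_simp

/-- `r⁻¹ (log r)^(2α-2)` is, up to the negative factor `2α-1`, the derivative of
`(log r)^(2α-1)`, which tends to `0`. -/
lemma integrableOn_mul_radialMajorant {α : ℝ} (hα' : α < 1 / 2) :
    IntegrableOn (fun r : ℝ => r * radialMajorant α r) (Set.Ioi (Real.exp 1)) := by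
  have hpos : ∀ r ∈ Set.Ici (Real.exp 1), 0 < r ∧ 0 < Real.log r := fun r hr =>
    ⟨(Real.exp_pos 1).trans_le hr,
      Real.log_pos ((Real.one_lt_exp_iff.2 one_pos).trans_le hr)⟩
  have key : IntegrableOn (fun r : ℝ => (2 * α - 1) * (r * radialMajorant α r))
      (Set.Ioi (Real.exp 1)) := by
    refine integrableOn_Ioi_deriv_of_nonpos' (g := fun r => Real.log r ^ (2 * α - 1)) (l := 0)
      ?_ ?_ ?_
    · intro r hr
      obtain ⟨h0, hL⟩ := hpos r hr
      convert (Real.hasDerivAt_log h0.ne').rpow_const (p := 2 * α - 1) (Or.inl hL.ne') using 1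
      rw [mul_radialMajorant α h0 hL, show 2 * α - 1 - 1 = 2 * α - 2 by ring]
      field_simp
    · intro r hr
      have h0 := (hpos r hr.out.le).1
      exact mul_nonpos_of_nonpos_of_nonneg (by linarith)
        (mul_nonneg h0.le (by unfold radialMajorant; positivity))
    · have h := (tendsto_rpow_neg_atTop (y := 1 - 2 * α) (by linarith)).comp
        Real.tendsto_log_atTop
      simpa [Function.comp_def] using h
  have h := key.const_mul (2 * α - 1)⁻¹
  have hne : 2 * α - 1 ≠ 0 := by linarith
  simpa [IntegrableOn, inv_mul_cancel_left₀ hne] using h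

lemma measurableSet_exterior :
    MeasurableSet {x : EuclideanSpace ℝ (Fin 2) | Real.exp 1 < ‖x‖} :=
  measurableSet_lt measurable_const measurable_norm

lemma lintegral_radialMajorant_lt_top {α : ℝ} (hα' : α < 1 / 2) :
    (∫⁻ x in {x : EuclideanSpace ℝ (Fin 2) | Real.exp 1 < ‖x‖},
      ENNReal.ofReal (radialMajorant α ‖x‖)) < ⊤ := by
  -- The polar coordinate lemma concerns the whole space, so cut off by an indicator in `r`.
  have h : Integrable (fun x : EuclideanSpace ℝ (Fin 2) =>
      (Set.Ioi (Real.exp 1)).indicator (radialMajorant α) ‖x‖) volume := by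
    rw [integrable_fun_norm_addHaar]
    have h1 : (fun y : ℝ => y ^ (Module.finrank ℝ (EuclideanSpace ℝ (Fin 2)) - 1) •
        (Set.Ioi (Real.exp 1)).indicator (radialMajorant α) y) =
        (Set.Ioi (Real.exp 1)).indicator (fun r => r * radialMajorant α r) := by
      ext y
      by_cases hy : y ∈ Set.Ioi (Real.exp 1) <;> simp [Set.indicator, hy]
    rw [h1]
    exact ((integrable_indicator_iff measurableSet_Ioi).2
      (integrableOn_mul_radialMajorant hα')).integrableOn
  refine lt_of_le_of_lt ?_ (h.integrableOn
    (s := {x : EuclideanSpace ℝ (Fin 2) | Real.exp 1 < ‖x‖})).lintegral_lt_top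
  refine setLIntegral_mono' measurableSet_exterior fun x hx => ?_
  rw [Set.indicator_of_mem (show ‖x‖ ∈ Set.Ioi (Real.exp 1) from hx)]

lemma norm_fderiv_log_norm_rpow_le {α : ℝ} (hα : 0 < α) (hα' : α < 1 / 2)
    {x : EuclideanSpace ℝ (Fin 2)} (hx : Real.exp 1 < ‖x‖) :
    ‖fderiv ℝ (fun x : EuclideanSpace ℝ (Fin 2) => Real.log ‖x‖ ^ α) x‖ ≤
      (‖x‖ * Real.log ‖x‖)⁻¹ * Real.log ‖x‖ ^ α := by
  have h0 : 0 < ‖x‖ := (Real.exp_pos 1).trans hx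
  have hL : 0 < Real.log ‖x‖ := one_pos.trans (one_lt_log_of_exp_one_lt hx)
  have hn : DifferentiableAt ℝ (fun y : EuclideanSpace ℝ (Fin 2) => ‖y‖) x :=
    (contDiffAt_norm ℝ (norm_pos_iff.1 h0)).differentiableAt one_ne_zero
  have hd := ((Real.hasDerivAt_log h0.ne').rpow_const (p := α)
    (Or.inl hL.ne')).comp_hasFDerivAt x hn.hasFDerivAt
  have hlip : ‖fderiv ℝ (fun y : EuclideanSpace ℝ (Fin 2) => ‖y‖) x‖ ≤ 1 := by
    simpa using norm_fderiv_le_of_lipschitz ℝ (x₀ := x)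
      (lipschitzWith_one_norm (E := EuclideanSpace ℝ (Fin 2)))
  have heq : fderiv ℝ (fun x : EuclideanSpace ℝ (Fin 2) => Real.log ‖x‖ ^ α) x = _ := hd.fderiv
  rw [heq, norm_smul, Real.norm_of_nonneg (by positivity), Real.rpow_sub_one hL.ne']
  have hP : 0 < Real.log ‖x‖ ^ α := Real.rpow_pos_of_pos hL α
  calc _ ≤ ‖x‖⁻¹ * α * (Real.log ‖x‖ ^ α / Real.log ‖x‖) * 1 := by gcongr
    _ = α * ((‖x‖ * Real.log ‖x‖)⁻¹ * Real.log ‖x‖ ^ α) := by field_simp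
    _ ≤ 1 * ((‖x‖ * Real.log ‖x‖)⁻¹ * Real.log ‖x‖ ^ α) := by
      gcongr
      linarith
    _ = _ := one_mul _

/-- For every `0 < α < 1/2`, the function `v(x) = (log |x|)^α` on the exterior domain
`{x ∈ ℝ² : |x| > e}` has finite weighted `H¹` norm, i.e.
`∫ |∇v|² < ∞` and `∫ (1 + |x| log |x|)⁻² v² < ∞`, yet `v(x) → ∞` as `|x| → ∞`. -/
theorem stmt_9 (α : ℝ) (hα : 0 < α) (hα' : α < 1 / 2) :
    (∫⁻ x in {x : EuclideanSpace ℝ (Fin 2) | Real.exp 1 < ‖x‖},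
        ENNReal.ofReal
          (‖fderiv ℝ (fun x : EuclideanSpace ℝ (Fin 2) => Real.log ‖x‖ ^ α) x‖ ^ 2)
        ∂volume) < ⊤ ∧
    (∫⁻ x in {x : EuclideanSpace ℝ (Fin 2) | Real.exp 1 < ‖x‖},
        ENNReal.ofReal
          (((1 + ‖x‖ * Real.log ‖x‖)⁻¹) ^ 2 * (Real.log ‖x‖ ^ α) ^ 2)
        ∂volume) < ⊤ ∧
    Filter.Tendsto (fun x : EuclideanSpace ℝ (Fin 2) => Real.log ‖x‖ ^ α)
      (Filter.cocompact (EuclideanSpace ℝ (Fin 2))) Filter.atTop := by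
  refine ⟨?_, ?_, ?_⟩
  · refine lt_of_le_of_lt (setLIntegral_mono' measurableSet_exterior fun x hx => ?_)
      (lintegral_radialMajorant_lt_top hα')
    refine ENNReal.ofReal_le_ofReal ?_
    rw [radialMajorant, ← mul_pow]
    exact pow_le_pow_left₀ (norm_nonneg _) (norm_fderiv_log_norm_rpow_le hα hα' hx) 2
  · refine lt_of_le_of_lt (setLIntegral_mono' measurableSet_exterior fun x hx => ?_)
      (lintegral_radialMajorant_lt_top hα')
    have h0 : 0 < ‖x‖ := (Real.exp_pos 1).trans hx
    have hL : 0 < Real.log ‖x‖ := one_pos.trans (one_lt_log_of_exp_one_lt hx)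
    refine ENNReal.ofReal_le_ofReal ?_
    rw [radialMajorant]
    gcongr
    linarith
  · exact (tendsto_rpow_atTop hα).comp
      (Real.tendsto_log_atTop.comp (tendsto_norm_cocompact_atTop (E := EuclideanSpace ℝ (Fin 2))))

end
end

section
/- For every fixed r ≥ 1, one has f_b(r)/r → 1 and f_b′(r) → 1 as b → ∞. Consequently, for every fixed point (x,y) with x² + y² ≥ 1, the velocity field u^b(x,y) = ( f_b′(r) y²/r² + (f_b(r)/r) x²/r², −(xy/r²)(f_b′(r) − f_b(r)/r) ) of the bounded-domain Stokes solution converges to (1,0) as b → ∞. This is the Stokes paradox in the limit of large circular domains: the limiting flow is the constant flow (1,0) everywhere. -/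
/-!
Since `g(b) ≥ 2b²(log b − 1)` for `b ≥ 1`, both `B(b)` and `C(b)` are `O(1 / (log b − 1))` and
tend to `0`; hence `A(b) → 0` and `D(b) → 1`. For fixed `r ≠ 0`, `f_b(r)/r` and `f_b′(r)` are linear
in the four coefficients, with coefficient `1` at `D(b)`, so both tend to `1`
(`tendsto_fb_div`, `tendsto_deriv_fb`). The velocity then tends to
`((y² + x²)/r², -(xy/r²)(1 − 1)) = (1, 0)`.
-/

noncomputable section
open Filter

/-- `g(b) = 2 + 2b²(log b − 1) + 2 log b`. -/
def gco (b : ℝ) : ℝ := 2 + 2 * b ^ 2 * (Real.log b - 1) + 2 * Real.log b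

/-- `B(b) = −2(b² + 1)/g(b)`. -/
def Bco (b : ℝ) : ℝ := -2 * (b ^ 2 + 1) / gco b

/-- `C(b) = 1/g(b)`. -/
def Cco (b : ℝ) : ℝ := 1 / gco b

/-- `A(b) = B(b)/2 + C(b)`. -/
def Aco (b : ℝ) : ℝ := Bco b / 2 + Cco b

/-- `D(b) = 1 − B(b)/2 − 2C(b)`. -/
def Dco (b : ℝ) : ℝ := 1 - Bco b / 2 - 2 * Cco b

/-- `f_b(r) = A(b) r⁻¹ + B(b) r log r + C(b) r³ + D(b) r`. -/
def fb (b r : ℝ) : ℝ := Aco b * r⁻¹ + Bco b * r * Real.log r + Cco b * r ^ 3 + Dco b * r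

theorem le_gco {b : ℝ} (hb : 1 ≤ b) : 2 * b ^ 2 * (Real.log b - 1) ≤ gco b := by
  have := Real.log_nonneg hb
  unfold gco
  linarith

theorem tendsto_const_div_log_sub_one (c : ℝ) :
    Tendsto (fun b : ℝ => c / (Real.log b - 1)) atTop (nhds 0) :=
  (tendsto_atTop_add_const_right _ (-1) Real.tendsto_log_atTop).const_div_atTop c

theorem tendsto_Bco : Tendsto Bco atTop (nhds 0) := by
  refine squeeze_zero_norm' ?_ (tendsto_const_div_log_sub_one 2)
  filter_upwards [eventually_ge_atTop 1, Real.tendsto_log_atTop.eventually_gt_atTop 1]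
    with b hb hl
  have hl' : 0 < Real.log b - 1 := by linarith
  have hg := le_gco hb
  have hb2 : 1 ≤ b ^ 2 := one_le_pow₀ hb
  have hg0 : 0 < gco b := lt_of_lt_of_le (by positivity) hg
  rw [Bco, Real.norm_eq_abs, abs_div, abs_of_pos hg0, abs_of_neg (by linarith),
    div_le_div_iff₀ hg0 hl']
  nlinarith

theorem tendsto_Cco : Tendsto Cco atTop (nhds 0) := by
  refine squeeze_zero_norm' ?_ (tendsto_const_div_log_sub_one 1)
  filter_upwards [eventually_ge_atTop 1, Real.tendsto_log_atTop.eventually_gt_atTop 1]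
    with b hb hl
  have hl' : 0 < Real.log b - 1 := by linarith
  have hg := le_gco hb
  have hb2 : 1 ≤ b ^ 2 := one_le_pow₀ hb
  have hg0 : 0 < gco b := lt_of_lt_of_le (by positivity) hg
  rw [Cco, Real.norm_eq_abs, abs_of_pos (by positivity), div_le_div_iff₀ hg0 hl']
  nlinarith

theorem tendsto_Aco : Tendsto Aco atTop (nhds 0) := by
  simpa [Aco] using! (tendsto_Bco.div_const 2).add tendsto_Cco

theorem tendsto_Dco : Tendsto Dco atTop (nhds 1) := by
  simpa [Dco] using!
    (((tendsto_const_nhds (x := (1 : ℝ))).sub (tendsto_Bco.div_const 2)).sub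
      (tendsto_Cco.const_mul 2))

/-- A combination of the four coefficients in which `D(b)` has weight `1` tends to `1`. -/
theorem tendsto_coeff_comb (p q s : ℝ) :
    Tendsto (fun b => Aco b * p + Bco b * q + Cco b * s + Dco b) atTop (nhds 1) := by
  simpa using (((tendsto_Aco.mul_const p).add (tendsto_Bco.mul_const q)).add
    (tendsto_Cco.mul_const s)).add tendsto_Dco

theorem hasDerivAt_fb (b : ℝ) {r : ℝ} (hr : r ≠ 0) :
    HasDerivAt (fb b)
      (Aco b * (-(r ^ 2)⁻¹) + Bco b * (Real.log r + 1) + Cco b * (3 * r ^ 2) + Dco b) r := by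
  have h := ((((hasDerivAt_inv hr).const_mul (Aco b)).add
    (((hasDerivAt_id r).const_mul (Bco b)).mul (Real.hasDerivAt_log hr))).add
    ((hasDerivAt_pow 3 r).const_mul (Cco b))).add ((hasDerivAt_id r).const_mul (Dco b))
  refine h.congr_deriv ?_
  simp only [id]
  field_simp
  push_cast
  ring

theorem tendsto_fb_div {r : ℝ} (hr : r ≠ 0) :
    Tendsto (fun b => fb b r / r) atTop (nhds 1) := by
  refine (tendsto_coeff_comb (r ^ 2)⁻¹ (Real.log r) (r ^ 2)).congr fun b => ?_
  unfold fb
  field_simp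

theorem tendsto_deriv_fb {r : ℝ} (hr : r ≠ 0) :
    Tendsto (fun b => deriv (fb b) r) atTop (nhds 1) :=
  (tendsto_coeff_comb (-(r ^ 2)⁻¹) (Real.log r + 1) (3 * r ^ 2)).congr fun b =>
    (hasDerivAt_fb b hr).deriv.symm

/-- For every fixed `r ≥ 1`, `f_b(r)/r → 1` and `f_b′(r) → 1` as `b → ∞`; consequently,
for every fixed `(x,y)` with `x² + y² ≥ 1`, the bounded-domain Stokes velocity
`u^b(x,y) = (f_b′(r) y²/r² + (f_b(r)/r) x²/r², −(xy/r²)(f_b′(r) − f_b(r)/r))`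
converges to `(1,0)` as `b → ∞` (the Stokes paradox for large circular domains). -/
theorem stmt_15 :
    (∀ r : ℝ, 1 ≤ r →
      Tendsto (fun b => fb b r / r) atTop (nhds 1) ∧
      Tendsto (fun b => deriv (fb b) r) atTop (nhds 1)) ∧
    (∀ x y : ℝ, 1 ≤ x ^ 2 + y ^ 2 →
      Tendsto (fun b =>
          ((deriv (fb b) (Real.sqrt (x ^ 2 + y ^ 2)) * (y ^ 2 / (x ^ 2 + y ^ 2)) +
              (fb b (Real.sqrt (x ^ 2 + y ^ 2)) / Real.sqrt (x ^ 2 + y ^ 2)) *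
                (x ^ 2 / (x ^ 2 + y ^ 2)),
            -(x * y / (x ^ 2 + y ^ 2)) *
              (deriv (fb b) (Real.sqrt (x ^ 2 + y ^ 2)) -
                fb b (Real.sqrt (x ^ 2 + y ^ 2)) / Real.sqrt (x ^ 2 + y ^ 2))) : ℝ × ℝ))
        atTop (nhds ((1 : ℝ), (0 : ℝ)))) := by
  refine ⟨fun r hr => ?_, fun x y hxy => ?_⟩
  · have hr0 : r ≠ 0 := by positivity
    exact ⟨tendsto_fb_div hr0, tendsto_deriv_fb hr0⟩
  · have hpos : 0 < x ^ 2 + y ^ 2 := by linarith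
    have hr0 : Real.sqrt (x ^ 2 + y ^ 2) ≠ 0 := (Real.sqrt_pos.2 hpos).ne'
    have hf := tendsto_fb_div hr0
    have hd := tendsto_deriv_fb hr0
    refine Tendsto.prodMk_nhds ?_ ?_
    · convert (hd.mul_const (y ^ 2 / (x ^ 2 + y ^ 2))).add
        (hf.mul_const (x ^ 2 / (x ^ 2 + y ^ 2))) using 2
      field_simp
      ring
    · simpa using (hd.sub hf).const_mul (-(x * y / (x ^ 2 + y ^ 2)))

end
end

section
/- There exists a constant c > 0 such that for all b ≥ e² and all r ∈ [1, b], the coefficients A(b), B(b), C(b) satisfy | −2A(b)/r² + B(b) + 2C(b) r² | ≤ c / log b; equivalently, |f_b′(r) − f_b(r)/r| ≤ c / log b uniformly on [1, b]. -/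
/-!
Since `A(b) = -b²/g(b)`, the expression to be bounded is a single quotient that factors:
`-2A/r² + B + 2C r² = -2 (r² - 1)(b² - r²) / (r² g(b))`.
On `1 ≤ r ≤ b` its absolute value is at most `2 b² / g(b)`, because `0 ≤ (r² - 1)/r² ≤ 1` and
`0 ≤ b² - r² ≤ b²`. For `log b ≥ 2` one has `log b - 1 ≥ (log b)/2`, so `g(b) ≥ b² log b`, and
`c = 2` works. The second bound is the first one, as `f_b′(r) - f_b(r)/r` equals the same
expression.
-/

noncomputable section

lemma gco_lower {b : ℝ} (hL : 2 ≤ Real.log b) : b ^ 2 * Real.log b ≤ gco b := by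
  unfold gco
  nlinarith [mul_nonneg (sq_nonneg b) (sub_nonneg.2 hL)]

lemma coeff_factor {b r : ℝ} (hr : r ≠ 0) (hg : gco b ≠ 0) :
    -2 * Aco b / r ^ 2 + Bco b + 2 * Cco b * r ^ 2 =
      -(2 * ((r ^ 2 - 1) * (b ^ 2 - r ^ 2)) / (r ^ 2 * gco b)) := by
  unfold Aco Bco Cco
  field_simp
  ring

lemma deriv_fb_sub {b r : ℝ} (hr : r ≠ 0) :
    deriv (fb b) r - fb b r / r = -2 * Aco b / r ^ 2 + Bco b + 2 * Cco b * r ^ 2 := by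
  have h : HasDerivAt (fb b)
      (Aco b * (-(r ^ 2)⁻¹) + ((Bco b * 1) * Real.log r + Bco b * r * r⁻¹)
        + Cco b * ((3 : ℕ) * r ^ 2) + Dco b * 1) r :=
    ((((hasDerivAt_inv hr).const_mul (Aco b)).add
      (((hasDerivAt_id' r).const_mul (Bco b)).mul (Real.hasDerivAt_log hr))).add
      ((hasDerivAt_pow 3 r).const_mul (Cco b))).add ((hasDerivAt_id' r).const_mul (Dco b))
  rw [h.deriv]
  unfold fb
  push_cast
  field_simp
  ring

lemma coeff_bound {b r : ℝ} (hb : Real.exp 2 ≤ b) (h1 : 1 ≤ r) (hrb : r ≤ b) :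
    |-2 * Aco b / r ^ 2 + Bco b + 2 * Cco b * r ^ 2| ≤ 2 / Real.log b := by
  have hb0 : 0 < b := (Real.exp_pos 2).trans_le hb
  have hL : 2 ≤ Real.log b := (Real.le_log_iff_exp_le hb0).2 hb
  have hg := gco_lower hL
  have hL0 : 0 < Real.log b := by linarith
  have hg0 : 0 < gco b := lt_of_lt_of_le (by positivity) hg
  have hr0 : 0 < r := by linarith
  have hr1 : 0 ≤ r ^ 2 - 1 := by nlinarith
  have hr2 : 0 ≤ b ^ 2 - r ^ 2 := by nlinarith
  rw [coeff_factor hr0.ne' hg0.ne', abs_neg, abs_of_nonneg (by positivity),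
    div_le_div_iff₀ (by positivity) hL0]
  have hprod : (r ^ 2 - 1) * (b ^ 2 - r ^ 2) ≤ r ^ 2 * b ^ 2 := by nlinarith [sq_nonneg (r ^ 2)]
  calc 2 * ((r ^ 2 - 1) * (b ^ 2 - r ^ 2)) * Real.log b
      ≤ 2 * (r ^ 2 * b ^ 2) * Real.log b := by gcongr
    _ = 2 * (r ^ 2 * (b ^ 2 * Real.log b)) := by ring
    _ ≤ 2 * (r ^ 2 * gco b) := by gcongr

/-- There is a constant `c > 0` such that for all `b ≥ e²` and all `r ∈ [1, b]`,
`|−2A(b)/r² + B(b) + 2C(b)r²| ≤ c/log b`; equivalently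
`|f_b′(r) − f_b(r)/r| ≤ c/log b` uniformly on `[1, b]`. -/
theorem stmt_16 :
    ∃ c : ℝ, 0 < c ∧
      ∀ b : ℝ, Real.exp 2 ≤ b → ∀ r : ℝ, 1 ≤ r → r ≤ b →
        |(-2 * Aco b / r ^ 2 + Bco b + 2 * Cco b * r ^ 2)| ≤ c / Real.log b ∧
        |deriv (fb b) r - fb b r / r| ≤ c / Real.log b := by
  refine ⟨2, two_pos, fun b hb r h1 hrb => ?_⟩
  have h := coeff_bound hb h1 hrb
  refine ⟨h, ?_⟩
  rwa [deriv_fb_sub (by linarith : r ≠ 0)]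

end
end
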